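/- arXiv:1704.01817 — 2 statements merged into one kernel-verified Lean document; each statement's English description precedes it below -/
import Mathlib

section
/- Holomorphic Bernstein identity for the complex Jordan algebra 𝕍 = Mat(m,ℂ) (the case 𝕍 = Mat(m,ℂ) of Proposition 2.2): Let m ≥ 1 and let U be an open subset of the space of m×m complex matrices contained in {Z : det Z ≠ 0}. Let L : U → ℂ be a holomorphic function with exp(L(Z)) = det Z for all Z ∈ U (a local branch of log det). Then for every s ∈ ℂ and every Z ∈ U, det(∂)[ exp(s·L) ](Z) = s(s+1)⋯(s+m−1) · exp((s−1)·L(Z)). -/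
noncomputable section

/-- Complex partial derivative of a function of an `m×m` complex matrix variable in the
entry `(i,j)`. -/
def matPd {m : ℕ} (i j : Fin m) (f : (Fin m → Fin m → ℂ) → ℂ) : (Fin m → Fin m → ℂ) → ℂ :=
  fun Z => fderiv ℂ f Z (Pi.single i (Pi.single j 1))

/-- The operator `det(∂) = Σ_{σ∈S_m} sgn(σ) ∂^m/(∂Z_{1σ(1)}⋯∂Z_{mσ(m)})`. -/
def detDeriv {m : ℕ} (f : (Fin m → Fin m → ℂ) → ℂ) : (Fin m → Fin m → ℂ) → ℂ :=
  fun Z => ∑ σ : Equiv.Perm (Fin m),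
    ((Equiv.Perm.sign σ : ℤ) : ℂ) *
      (List.foldr (fun i g => matPd i (σ i) g) f (List.finRange m)) Z

open scoped ContDiff

lemma bern_perm_sum {k : ℕ} (g : Equiv.Perm (Fin (k+1)) → ℂ) :
    ∑ τ : Equiv.Perm (Fin (k+1)), ((Equiv.Perm.sign τ : ℤ) : ℂ) * g τ
      = ∑ p : Fin (k+1), ((Equiv.Perm.sign (Equiv.swap 0 p) : ℤ) : ℂ) *
        ∑ e : Equiv.Perm (Fin k), ((Equiv.Perm.sign e : ℤ) : ℂ) *
          g (Equiv.Perm.decomposeFin.symm (p, e)) := by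
  rw [← Equiv.sum_comp Equiv.Perm.decomposeFin.symm, Fintype.sum_prod_type]
  refine Finset.sum_congr rfl fun p _ => ?_
  rw [Finset.mul_sum]
  refine Finset.sum_congr rfl fun e _ => ?_
  rw [Equiv.Perm.decomposeFin.symm_sign, ← mul_assoc]
  congr 1
  by_cases h : p = 0
  · simp [h]
  · rw [Equiv.Perm.sign_swap (Ne.symm h)]
    simp [h]

lemma bern_det_expand {k : ℕ} (A : Matrix (Fin (k+1)) (Fin (k+1)) ℂ) :
    A.det = ∑ p : Fin (k+1), ((Equiv.Perm.sign (Equiv.swap 0 p) : ℤ) : ℂ) *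
      (A p 0 * (A.submatrix (fun a => Equiv.swap 0 p a.succ) Fin.succ).det) := by
  rw [Matrix.det_apply', bern_perm_sum]
  refine Finset.sum_congr rfl fun p _ => ?_
  congr 1
  rw [Matrix.det_apply', Finset.mul_sum]
  refine Finset.sum_congr rfl fun e _ => ?_
  rw [Fin.prod_univ_succ]
  simp only [Equiv.Perm.decomposeFin_symm_apply_zero, Equiv.Perm.decomposeFin_symm_apply_succ,
    Matrix.submatrix_apply]
  ring

lemma bern_alg {k : ℕ} (A : Matrix (Fin (k+1)) (Fin (k+1)) ℂ) :
    ∑ p : Fin (k+1), ((Equiv.Perm.sign (Equiv.swap 0 p) : ℤ) : ℂ) *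
      ∑ b : Fin k, ((A.submatrix (fun a => Equiv.swap 0 p a.succ) Fin.succ).updateCol b
        (fun a => -(A (Equiv.swap 0 p a.succ) 0 * A p b.succ))).det = k * A.det := by
  simp_rw [Finset.mul_sum]
  rw [Finset.sum_comm]
  have key : ∀ b : Fin k, ∑ p : Fin (k+1), ((Equiv.Perm.sign (Equiv.swap 0 p) : ℤ) : ℂ) *
      ((A.submatrix (fun a => Equiv.swap 0 p a.succ) Fin.succ).updateCol b
        (fun a => -(A (Equiv.swap 0 p a.succ) 0 * A p b.succ))).det = A.det := by
    intro b
    have h1 : (A.submatrix id (Equiv.swap 0 b.succ)).det = - A.det := by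
      rw [Matrix.det_permute', Equiv.Perm.sign_swap (Fin.succ_ne_zero b).symm]
      simp
    rw [← neg_eq_iff_eq_neg.mpr h1.symm.symm, bern_det_expand, ← Finset.sum_neg_distrib]
    refine Finset.sum_congr rfl fun p _ => ?_
    have h2 : (fun a : Fin k => -(A (Equiv.swap 0 p a.succ) 0 * A p b.succ))
        = (-(A p b.succ)) • (fun a : Fin k => A (Equiv.swap 0 p a.succ) 0) := by
      ext a
      simp
      ring
    rw [h2, Matrix.det_updateCol_smul]
    have h3 : (A.submatrix (fun a => Equiv.swap 0 p a.succ) Fin.succ).updateCol b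
        (fun a : Fin k => A (Equiv.swap 0 p a.succ) 0) =
        ((A.submatrix id (Equiv.swap 0 b.succ)).submatrix
          (fun a => Equiv.swap 0 p a.succ) Fin.succ) := by
      ext a c
      by_cases hc : c = b
      · subst hc
        simp
      · rw [Matrix.updateCol_ne hc]
        simp only [Matrix.submatrix_apply, id]
        rw [Equiv.swap_apply_of_ne_of_ne (Fin.succ_ne_zero c)
          (fun h => hc (Fin.succ_injective _ h))]
    rw [h3]
    simp
  rw [Finset.sum_congr rfl fun b _ => key b]
  simp

lemma bern_hasFDerivAt_det {E : Type*} [NormedAddCommGroup E] [NormedSpace ℂ E] {k : ℕ}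
    (A : E → Matrix (Fin k) (Fin k) ℂ) (Z : E)
    (hA : ∀ a b, DifferentiableAt ℂ (fun W => A W a b) Z) (v : E) :
    fderiv ℂ (fun W => (A W).det) Z v =
      ∑ b, ((A Z).updateCol b (fun a => fderiv ℂ (fun W => A W a b) Z v)).det := by
  simp_rw [Matrix.det_apply']
  have h := HasFDerivAt.fun_sum (u := Finset.univ) (x := Z) (𝕜 := ℂ)
    (A := fun (σ : Equiv.Perm (Fin k)) W => ((Equiv.Perm.sign σ : ℤ) : ℂ) * ∏ i, A W (σ i) i)
    (fun σ _ => ((HasFDerivAt.finsetProd (u := Finset.univ)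
      (g := fun i W => A W (σ i) i)
      (fun i _ => (hA (σ i) i).hasFDerivAt)).const_mul ((Equiv.Perm.sign σ : ℤ) : ℂ)))
  rw [h.fderiv, Finset.sum_comm]
  simp only [sum_apply, smul_apply, smul_eq_mul,
    Finset.mul_sum]
  refine Finset.sum_congr rfl fun σ _ => Finset.sum_congr rfl fun b _ => ?_
  congr 1
  rw [← Finset.mul_prod_erase Finset.univ _ (Finset.mem_univ b), mul_comm]
  congr 1
  · simp
  · refine Finset.prod_congr rfl fun i hi => ?_
    rw [Matrix.updateCol_ne (Finset.ne_of_mem_erase hi)]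

lemma bern_contDiffOn_det {E : Type*} [NormedAddCommGroup E] [NormedSpace ℂ E] {k : ℕ}
    {U : Set E} (A : E → Matrix (Fin k) (Fin k) ℂ)
    (hA : ∀ a b, ContDiffOn ℂ ∞ (fun W => A W a b) U) :
    ContDiffOn ℂ ∞ (fun W => (A W).det) U := by
  simp_rw [Matrix.det_apply']
  exact ContDiffOn.sum fun σ _ => contDiffOn_const.mul (contDiffOn_prod fun i _ => hA _ _)

lemma bern_contDiff_entry {m : ℕ} (a b : Fin m) :
    ContDiff ℂ ∞ (fun W : Fin m → Fin m → ℂ => W a b) := by fun_prop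

lemma bern_contDiffOn_mdet {m : ℕ} (U : Set (Fin m → Fin m → ℂ)) :
    ContDiffOn ℂ ∞ (fun W : Fin m → Fin m → ℂ => (Matrix.of W).det) U :=
  bern_contDiffOn_det _ fun a b => (bern_contDiff_entry a b).contDiffOn

lemma bern_contDiffOn_inv {m : ℕ} (U : Set (Fin m → Fin m → ℂ))
    (hUinv : ∀ Z ∈ U, (Matrix.of Z).det ≠ 0) (k l : Fin m) :
    ContDiffOn ℂ ∞ (fun W : Fin m → Fin m → ℂ => (Matrix.of W)⁻¹ k l) U := by
  simp only [Matrix.inv_def, Ring.inverse_eq_inv', Matrix.smul_apply, smul_eq_mul,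
    Matrix.adjugate_apply]
  refine ((bern_contDiffOn_mdet U).inv hUinv).mul (bern_contDiffOn_det _ fun a b => ?_)
  by_cases h : a = l
  · subst h
    simp only [Matrix.updateRow_self]
    exact contDiffOn_const
  · simp only [Matrix.updateRow_ne h]
    exact (bern_contDiff_entry a b).contDiffOn

lemma bern_matPd_entry {m : ℕ} (i j a b : Fin m) (Z : Fin m → Fin m → ℂ) :
    matPd i j (fun W => W a b) Z = Matrix.single i j (1:ℂ) a b := by
  unfold matPd
  have h : HasFDerivAt (fun W : Fin m → Fin m → ℂ => W a b)
    ((ContinuousLinearMap.proj (R := ℂ) (φ := fun _ : Fin m => ℂ) b).comp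
      (ContinuousLinearMap.proj (R := ℂ) (φ := fun _ : Fin m => Fin m → ℂ) a)) Z :=
    ((ContinuousLinearMap.proj (R := ℂ) (φ := fun _ : Fin m => ℂ) b).comp
      (ContinuousLinearMap.proj (R := ℂ) (φ := fun _ : Fin m => Fin m → ℂ) a)).hasFDerivAt
  rw [h.fderiv]
  by_cases ha : a = i
  · subst ha
    by_cases hb : b = j
    · subst hb
      simp
    · simp [Matrix.single_apply, hb, Ne.symm hb]
  · simp [Matrix.single_apply, ha, Ne.symm ha]

lemma bern_matPd_det {m : ℕ} (i j : Fin m) (Z : Fin m → Fin m → ℂ)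
    (hZ : (Matrix.of Z).det ≠ 0) :
    matPd i j (fun W => (Matrix.of W).det) Z = (Matrix.of Z).det * (Matrix.of Z)⁻¹ j i := by
  unfold matPd
  rw [bern_hasFDerivAt_det (fun W : Fin m → Fin m → ℂ => Matrix.of W) Z fun a b =>
    ((bern_contDiff_entry a b).contDiffAt).differentiableAt (by simp)]
  have h : ∀ a b, fderiv ℂ (fun W : Fin m → Fin m → ℂ => Matrix.of W a b) Z
      (Pi.single i (Pi.single j 1)) = Matrix.single i j (1:ℂ) a b :=
    fun a b => bern_matPd_entry i j a b Z
  simp_rw [h]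
  rw [Finset.sum_eq_single j]
  · rw [Matrix.inv_def, Matrix.smul_apply, Ring.inverse_eq_inv', smul_eq_mul,
      mul_inv_cancel_left₀ hZ]
    have h1 : (Matrix.of Z).adjugate j i = (Matrix.of Z).transpose.adjugate i j := by
      rw [← Matrix.adjugate_transpose, Matrix.transpose_apply]
    rw [h1, Matrix.adjugate_apply, Matrix.updateRow_transpose, Matrix.det_transpose]
    congr 2
    ext a
    by_cases ha : a = i
    · subst ha
      simp
    · simp [ha, Ne.symm ha]
  · intro b _ hb
    apply Matrix.det_eq_zero_of_column_eq_zero b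
    intro a
    simp [Matrix.single_apply, Ne.symm hb]
  · simp

lemma bern_matPd_inv {m : ℕ} (U : Set (Fin m → Fin m → ℂ)) (hU : IsOpen U)
    (hUinv : ∀ Z ∈ U, (Matrix.of Z).det ≠ 0) (i j k l : Fin m)
    (Z : Fin m → Fin m → ℂ) (hZ : Z ∈ U) :
    matPd i j (fun W => (Matrix.of W)⁻¹ k l) Z
      = -((Matrix.of Z)⁻¹ k i * (Matrix.of Z)⁻¹ j l) := by
  have hd : ∀ a b, DifferentiableAt ℂ (fun W : Fin m → Fin m → ℂ => (Matrix.of W)⁻¹ a b) Z :=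
    fun a b => ((bern_contDiffOn_inv U hUinv a b).contDiffAt (hU.mem_nhds hZ)).differentiableAt
      (by simp)
  have hde : ∀ a b, DifferentiableAt ℂ (fun W : Fin m → Fin m → ℂ => W a b) Z :=
    fun a b => (bern_contDiff_entry a b).contDiffAt.differentiableAt (by simp)
  set D : Matrix (Fin m) (Fin m) ℂ :=
    Matrix.of fun a b => matPd i j (fun W => (Matrix.of W)⁻¹ a b) Z with hD
  have key : Matrix.single i j (1:ℂ) * (Matrix.of Z)⁻¹ + Matrix.of Z * D = 0 := by
    ext a c
    have h1 : (fun W : Fin m → Fin m → ℂ => ∑ b, W a b * (Matrix.of W)⁻¹ b c)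
        =ᶠ[nhds Z] fun _ => (1 : Matrix (Fin m) (Fin m) ℂ) a c := by
      filter_upwards [hU.mem_nhds hZ] with W hW
      have := Matrix.mul_nonsing_inv (Matrix.of W) (isUnit_iff_ne_zero.mpr (hUinv W hW))
      rw [← this, Matrix.mul_apply]
      rfl
    have h2 := h1.fderiv_eq (𝕜 := ℂ)
    rw [(HasFDerivAt.fun_sum (𝕜 := ℂ) (u := Finset.univ)
      (fun b _ => (hde a b).hasFDerivAt.fun_mul (hd b c).hasFDerivAt)).fderiv] at h2
    have h3 := congrArg (fun T : (Fin m → Fin m → ℂ) →L[ℂ] ℂ => T (Pi.single i (Pi.single j 1))) h2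
    have h4 : ∀ b, fderiv ℂ (fun W : Fin m → Fin m → ℂ => W a b) Z
      (Pi.single i (Pi.single j 1)) = Matrix.single i j (1:ℂ) a b :=
      fun b => bern_matPd_entry i j a b Z
    simp only [sum_apply, add_apply,
      smul_apply, smul_eq_mul, h4, fderiv_fun_const] at h3
    rw [Matrix.add_apply, Matrix.mul_apply, Matrix.mul_apply, ← Finset.sum_add_distrib]
    refine Eq.trans ?_ (h3.trans (by simp))
    refine Finset.sum_congr rfl fun b _ => ?_
    rw [add_comm]
    congr 1
    exact mul_comm _ _
  have hD2 : D = -((Matrix.of Z)⁻¹ * (Matrix.single i j (1:ℂ) * (Matrix.of Z)⁻¹)) := by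
    have h5 := congrArg (fun T => (Matrix.of Z)⁻¹ * T) key
    simp only [mul_add, mul_zero] at h5
    rw [Matrix.nonsing_inv_mul_cancel_left _ _ (isUnit_iff_ne_zero.mpr (hUinv Z hZ))] at h5
    exact eq_neg_of_add_eq_zero_right h5
  have h6 := congrFun (congrFun hD2 k) l
  rw [hD] at h6
  refine Eq.trans h6 ?_
  rw [Matrix.neg_apply, Matrix.mul_apply, Finset.sum_eq_single i]
  · simp
  · intro b _ hb
    simp [hb]
  · simp

/-- Iterated derivative. -/
def bernT {m k : ℕ} (r c : Fin k → Fin m) (f : (Fin m → Fin m → ℂ) → ℂ) :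
    (Fin m → Fin m → ℂ) → ℂ :=
  List.foldr (fun a g => matPd (r a) (c a) g) f (List.finRange k)

lemma bernT_succ {m k : ℕ} (r c : Fin (k+1) → Fin m) (f : (Fin m → Fin m → ℂ) → ℂ) :
    bernT r c f = matPd (r 0) (c 0) (bernT (fun a => r a.succ) (fun a => c a.succ) f) := by
  simp [bernT, List.finRange_succ, List.foldr_map]

lemma bern_matPd_contDiffOn {m : ℕ} (U : Set (Fin m → Fin m → ℂ)) (hU : IsOpen U)
    (i j : Fin m) (f : (Fin m → Fin m → ℂ) → ℂ) (hf : ContDiffOn ℂ ∞ f U) :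
    ContDiffOn ℂ ∞ (matPd i j f) U :=
  ((contDiffOn_infty_iff_fderiv_of_isOpen hU).1 hf).2.clm_apply contDiffOn_const

lemma bernT_contDiffOn {m : ℕ} (U : Set (Fin m → Fin m → ℂ)) (hU : IsOpen U)
    (f : (Fin m → Fin m → ℂ) → ℂ) (hf : ContDiffOn ℂ ∞ f U) :
    ∀ (k : ℕ) (r c : Fin k → Fin m), ContDiffOn ℂ ∞ (bernT r c f) U
  | 0, r, c => by simpa [bernT] using hf
  | k+1, r, c => by
    rw [bernT_succ]
    exact bern_matPd_contDiffOn U hU _ _ _ (bernT_contDiffOn U hU f hf k _ _)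

lemma bern_main {m : ℕ} (U : Set (Fin m → Fin m → ℂ)) (hU : IsOpen U)
    (hUinv : ∀ Z ∈ U, (Matrix.of Z).det ≠ 0)
    (s : ℂ) (f : (Fin m → Fin m → ℂ) → ℂ) (hf : ContDiffOn ℂ ∞ f U)
    (hfd : ∀ i j, ∀ Z ∈ U, matPd i j f Z = s * (Matrix.of Z)⁻¹ j i * f Z) :
    ∀ (k : ℕ) (r c : Fin k → Fin m), ∀ Z ∈ U,
      ∑ τ : Equiv.Perm (Fin k), ((Equiv.Perm.sign τ : ℤ) : ℂ) * bernT r (fun a => c (τ a)) f Z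
        = (∏ q : Fin k, (s + (q : ℕ))) * (f Z * ((Matrix.of Z)⁻¹.submatrix c r).det) := by
  intro k
  induction k with
  | zero =>
    intro r c Z hZ
    simp [bernT]
  | succ k ih =>
    intro r c Z hZ
    have hfZ : DifferentiableAt ℂ f Z :=
      (hf.contDiffAt (hU.mem_nhds hZ)).differentiableAt (by simp)
    rw [bern_perm_sum (fun τ => bernT r (fun a => c (τ a)) f Z)]
    set A : Matrix (Fin (k+1)) (Fin (k+1)) ℂ := (Matrix.of Z)⁻¹.submatrix c r with hA
    have step : ∀ p : Fin (k+1), ∑ e : Equiv.Perm (Fin k), ((Equiv.Perm.sign e : ℤ) : ℂ) *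
          bernT r (fun a => c (Equiv.Perm.decomposeFin.symm (p, e) a)) f Z
        = (∏ q : Fin k, (s + (q : ℕ))) * f Z *
          (s * (A p 0 * (A.submatrix (fun a => Equiv.swap 0 p a.succ) Fin.succ).det) +
           ∑ b : Fin k, ((A.submatrix (fun a => Equiv.swap 0 p a.succ) Fin.succ).updateCol b
        (fun a => -(A (Equiv.swap 0 p a.succ) 0 * A p b.succ))).det) := by
      intro p
      have hT : ∀ e : Equiv.Perm (Fin k), DifferentiableAt ℂ (bernT (fun a => r a.succ)
          (fun a => c (Equiv.swap 0 p (e a).succ)) f) Z := fun e =>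
        ((bernT_contDiffOn U hU f hf k _ _).contDiffAt (hU.mem_nhds hZ)).differentiableAt (by simp)
      have h1 : (fun W => ∑ e : Equiv.Perm (Fin k), ((Equiv.Perm.sign e : ℤ) : ℂ) *
          bernT (fun a => r a.succ) (fun a => c (Equiv.swap 0 p (e a).succ)) f W)
          =ᶠ[nhds Z] fun W => (∏ q : Fin k, (s + (q : ℕ))) * (f W *
            ((Matrix.of W)⁻¹.submatrix (fun a : Fin k => c (Equiv.swap 0 p a.succ))
              (fun a : Fin k => r a.succ)).det) := by
        filter_upwards [hU.mem_nhds hZ] with W hW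
        exact ih (fun a => r a.succ) (fun a => c (Equiv.swap 0 p a.succ)) W hW
      have hd : ∀ a b, DifferentiableAt ℂ
          (fun W : Fin m → Fin m → ℂ => (Matrix.of W)⁻¹ a b) Z :=
        fun a b => ((bern_contDiffOn_inv U hUinv a b).contDiffAt
          (hU.mem_nhds hZ)).differentiableAt (by simp)
      have hdet : DifferentiableAt ℂ (fun W : Fin m → Fin m → ℂ =>
          ((Matrix.of W)⁻¹.submatrix (fun a : Fin k => c (Equiv.swap 0 p a.succ))
              (fun a : Fin k => r a.succ)).det) Z :=
        ((bern_contDiffOn_det (U := U) (fun W : Fin m → Fin m → ℂ =>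
          ((Matrix.of W)⁻¹.submatrix (fun a : Fin k => c (Equiv.swap 0 p a.succ))
              (fun a : Fin k => r a.succ))) (fun a b => bern_contDiffOn_inv U hUinv _ _)).contDiffAt
          (hU.mem_nhds hZ)).differentiableAt (by simp)
      have h2 := h1.fderiv_eq (𝕜 := ℂ)
      rw [(HasFDerivAt.fun_sum (u := Finset.univ) (fun e _ => (hT e).hasFDerivAt.const_mul
        ((Equiv.Perm.sign e : ℤ) : ℂ))).fderiv,
        ((hfZ.hasFDerivAt.fun_mul hdet.hasFDerivAt).const_mul _).fderiv] at h2
      have h3 := congrArg (fun T : (Fin m → Fin m → ℂ) →L[ℂ] ℂ => T (Pi.single (r 0) (Pi.single (c p) 1))) h2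
      simp only [sum_apply, add_apply,
        smul_apply, smul_eq_mul] at h3
      rw [bern_hasFDerivAt_det (fun W : Fin m → Fin m → ℂ =>
        (Matrix.of W)⁻¹.submatrix (fun a : Fin k => c (Equiv.swap 0 p a.succ))
              (fun a : Fin k => r a.succ)) Z (fun a b => hd _ _)] at h3
      have h4 : ∀ a b, fderiv ℂ (fun W : Fin m → Fin m → ℂ =>
          (Matrix.of W)⁻¹.submatrix (fun a : Fin k => c (Equiv.swap 0 p a.succ))
              (fun a : Fin k => r a.succ) a b) Z (Pi.single (r 0) (Pi.single (c p) 1))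
          = -(A (Equiv.swap 0 p a.succ) 0 * A p b.succ) := fun a b =>
        bern_matPd_inv U hU hUinv (r 0) (c p) _ _ Z hZ
      have h5 : fderiv ℂ f Z (Pi.single (r 0) (Pi.single (c p) 1)) = s * A p 0 * f Z :=
        hfd _ _ Z hZ
      simp only [h4, h5] at h3
      have h6 : ∀ e : Equiv.Perm (Fin k),
          bernT r (fun a => c (Equiv.Perm.decomposeFin.symm (p, e) a)) f Z =
          fderiv ℂ (bernT (fun a => r a.succ) (fun a => c (Equiv.swap 0 p (e a).succ)) f) Z
            (Pi.single (r 0) (Pi.single (c p) 1)) := by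
        intro e
        rw [bernT_succ]
        simp only [Equiv.Perm.decomposeFin_symm_apply_zero,
          Equiv.Perm.decomposeFin_symm_apply_succ]
        rfl
      simp only [h6]
      rw [h3]
      have h7 : (Matrix.of Z)⁻¹.submatrix (fun a : Fin k => c (Equiv.swap 0 p a.succ))
              (fun a : Fin k => r a.succ)
          = A.submatrix (fun a => Equiv.swap 0 p a.succ) Fin.succ := rfl
      rw [h7]
      ring
    simp only [step]
    have e1 := bern_det_expand A
    have e2 := bern_alg A
    rw [Fin.prod_univ_castSucc]
    simp only [Fin.val_castSucc, Fin.val_last]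
    calc _ = (∏ q : Fin k, (s + (q : ℕ))) * f Z * (s * (∑ p : Fin (k+1), ((Equiv.Perm.sign (Equiv.swap 0 p) : ℤ) : ℂ) *
      (A p 0 * (A.submatrix (fun a => Equiv.swap 0 p a.succ) Fin.succ).det)) + ∑ p : Fin (k+1), ((Equiv.Perm.sign (Equiv.swap 0 p) : ℤ) : ℂ) *
      ∑ b : Fin k, ((A.submatrix (fun a => Equiv.swap 0 p a.succ) Fin.succ).updateCol b
        (fun a => -(A (Equiv.swap 0 p a.succ) 0 * A p b.succ))).det) := by
          rw [Finset.mul_sum, ← Finset.sum_add_distrib, Finset.mul_sum]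
          refine Finset.sum_congr rfl fun p _ => ?_
          ring
      _ = _ := by
          rw [e2, ← e1]
          ring

/-- Holomorphic Bernstein identity for `𝕍 = Mat(m,ℂ)`: if `L` is a holomorphic branch of
`log det` on an open set `U` of invertible matrices, then
`det(∂)[exp(s·L)] = s(s+1)⋯(s+m−1)·exp((s−1)·L)` on `U`. -/
theorem bernstein_identity_matrix_holomorphic (m : ℕ) (hm : 1 ≤ m)
    (U : Set (Fin m → Fin m → ℂ)) (hU : IsOpen U)
    (hUinv : ∀ Z ∈ U, (Matrix.of Z).det ≠ 0)
    (L : (Fin m → Fin m → ℂ) → ℂ) (hL : DifferentiableOn ℂ L U)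
    (hLlog : ∀ Z ∈ U, Complex.exp (L Z) = (Matrix.of Z).det)
    (s : ℂ) (Z : Fin m → Fin m → ℂ) (hZ : Z ∈ U) :
    detDeriv (fun W => Complex.exp (s * L W)) Z
      = (∏ k : Fin m, (s + (k : ℕ))) * Complex.exp ((s - 1) * L Z) := by
  have hdetd : ∀ W ∈ U, DifferentiableAt ℂ (fun W : Fin m → Fin m → ℂ => (Matrix.of W).det) W :=
    fun W hW => ((bern_contDiffOn_mdet U).contDiffAt (hU.mem_nhds hW)).differentiableAt (by simp)
  have hLd : ∀ W ∈ U, DifferentiableAt ℂ L W := fun W hW => hL.differentiableAt (hU.mem_nhds hW)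
  have hfL : ∀ W ∈ U, fderiv ℂ L W = ((Matrix.of W).det)⁻¹ •
      fderiv ℂ (fun W : Fin m → Fin m → ℂ => (Matrix.of W).det) W := by
    intro W hW
    have h1 : (fun W => Complex.exp (L W)) =ᶠ[nhds W]
        (fun W : Fin m → Fin m → ℂ => (Matrix.of W).det) := by
      filter_upwards [hU.mem_nhds hW] with V hV using hLlog V hV
    rw [← h1.fderiv_eq, (hLd W hW).hasFDerivAt.cexp.fderiv, hLlog W hW, smul_smul,
      inv_mul_cancel₀ (hUinv W hW), one_smul]
  have hLs : ContDiffOn ℂ ∞ L U := by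
    rw [contDiffOn_infty_iff_fderiv_of_isOpen hU]
    refine ⟨hL, ContDiffOn.congr ?_ hfL⟩
    exact ((bern_contDiffOn_mdet U).inv hUinv).smul
      ((contDiffOn_infty_iff_fderiv_of_isOpen hU).1 (bern_contDiffOn_mdet U)).2
  have hf : ContDiffOn ℂ ∞ (fun W => Complex.exp (s * L W)) U :=
    (contDiffOn_const.mul hLs).cexp
  have hfd : ∀ i j, ∀ Z ∈ U, matPd i j (fun W => Complex.exp (s * L W)) Z
      = s * (Matrix.of Z)⁻¹ j i * Complex.exp (s * L Z) := by
    intro i j W hW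
    have h1 := bern_matPd_det i j W (hUinv W hW)
    unfold matPd at h1 ⊢
    rw [((hLd W hW).hasFDerivAt.const_mul s).cexp.fderiv, hfL W hW]
    simp only [smul_apply, smul_eq_mul]
    rw [h1, inv_mul_cancel_left₀ (hUinv W hW)]
    ring
  have hmain := bern_main U hU hUinv s _ hf hfd m id id Z hZ
  refine Eq.trans hmain ?_
  congr 1
  rw [Matrix.submatrix_id_id, Matrix.det_nonsing_inv, Ring.inverse_eq_inv', ← hLlog Z hZ,
    ← Complex.exp_neg, ← Complex.exp_add]
  congr 1
  ring
end
end

section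
/- Local zeta functional equation for the sign character in dimension one (the case V = ℝ, r = 1, d = 1 of Theorem 4.3, restricted to the strip where both zeta integrals converge absolutely): Let f : ℝ → ℂ be a Schwartz function and let s ∈ ℂ with −1 < Re(s) < 0. Then both integrals below converge absolutely and ∫_{ℝ} 𝓕f(ξ) · sign(ξ) · |ξ|^{s} dξ = −i · π^{−s−1/2} · ( Γ(s/2 + 1) / Γ((1−s)/2) ) · ∫_{ℝ} f(x) · sign(x) · |x|^{−s−1} dx. -/
noncomputable section

open MeasureTheory

/-- The Fourier transform `𝓕f(ξ) = ∫ e^{−2πi x ξ} f(x) dx` on `ℝ`. -/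
def fourierTr (f : ℝ → ℂ) (ξ : ℝ) : ℂ :=
  ∫ x : ℝ, Complex.exp (-2 * Real.pi * Complex.I * (x : ℂ) * (ξ : ℂ)) * f x



lemma aux_int (g : SchwartzMap ℝ ℂ) (c : ℝ) (h1 : -1 < c) (h2 : c < 0) :
    Integrable (fun x : ℝ => ‖g x‖ * |x| ^ c) := by
  obtain ⟨C0, hC0, hb0⟩ := g.decay 0 0
  obtain ⟨C2, hC2, hb2⟩ := g.decay 2 0
  simp only [norm_iteratedFDeriv_zero, pow_zero, one_mul] at hb0 hb2
  set H : ℝ → ℝ := fun y => if y ≤ 1 then y ^ c else y ^ (-2 : ℝ) with hH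
  have hHi : IntegrableOn H (Set.Ioi 0) := by
    rw [← Set.Ioc_union_Ioi_eq_Ioi (zero_le_one' ℝ)]
    refine IntegrableOn.union ?_ ?_
    · have := (intervalIntegral.intervalIntegrable_rpow' (a := 0) (b := 1) h1)
      rw [intervalIntegrable_iff_integrableOn_Ioc_of_le zero_le_one] at this
      refine this.congr_fun (fun y hy => ?_) measurableSet_Ioc
      simp [hH, hy.2]
    · refine (integrableOn_Ioi_rpow_of_lt (by norm_num : (-2 : ℝ) < -1) one_pos).congr_fun
        (fun y hy => ?_) measurableSet_Ioi
      simp only [hH, if_neg (not_le.2 (Set.mem_Ioi.1 hy))]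
  have hHi2 : Integrable (fun x : ℝ => H ‖x‖) := by
    rw [integrable_fun_norm_addHaar (μ := (volume : Measure ℝ))]
    simpa using hHi
  refine (hHi2.const_mul (max C0 C2)).mono' ?_ (Filter.Eventually.of_forall fun x => ?_)
  · have : Measurable (fun x : ℝ => |x| ^ c) := by fun_prop
    exact g.continuous.norm.aestronglyMeasurable.mul this.aestronglyMeasurable
  · have hnn : 0 ≤ |x| ^ c := by positivity
    rw [Real.norm_of_nonneg (by positivity)]
    simp only [hH, Real.norm_eq_abs]
    split_ifs with hx
    · exact mul_le_mul_of_nonneg_right ((hb0 x).trans (le_max_left _ _)) hnn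
    · push Not at hx
      have e1 : |x| ^ c ≤ 1 := Real.rpow_le_one_of_one_le_of_nonpos hx.le h2.le
      have e2 : |x| ^ (-2 : ℝ) = (|x| ^ 2)⁻¹ := by
        rw [Real.rpow_neg (abs_nonneg _)]; norm_num
      rw [e2, ← div_eq_mul_inv, le_div_iff₀ (by positivity)]
      calc ‖g x‖ * |x| ^ c * |x| ^ 2 ≤ ‖g x‖ * 1 * |x| ^ 2 := by gcongr
        _ = ‖x‖ ^ 2 * ‖g x‖ := by rw [Real.norm_eq_abs]; ring
        _ ≤ _ := (hb2 x).trans (le_max_right _ _)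

lemma aux_norm_sign {x : ℝ} (hx : x ≠ 0) : ‖(Real.sign x : ℂ)‖ = 1 := by
  rcases Real.sign_apply_eq_of_ne_zero x hx with h | h <;> simp [h]

lemma aux_ne : ∀ᵐ x : ℝ, x ≠ 0 := by
  simp [ae_iff]

lemma aux_meas_sign : Measurable Real.sign := by
  unfold Real.sign
  refine Measurable.ite measurableSet_Iio measurable_const ?_
  exact Measurable.ite measurableSet_Ioi measurable_const measurable_const

lemma aux_int' (g : SchwartzMap ℝ ℂ) (s : ℂ) (h1 : -1 < s.re) (h2 : s.re < 0) :
    Integrable (fun x : ℝ => g x * (Real.sign x : ℂ) * (((|x| : ℝ) : ℂ) ^ s)) := by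
  refine (aux_int g s.re h1 h2).mono' ?_ ?_
  · have m1 : Measurable (fun x : ℝ => (Real.sign x : ℂ)) :=
      Complex.measurable_ofReal.comp aux_meas_sign
    have m2 : Measurable (fun x : ℝ => (((|x| : ℝ) : ℂ) ^ s)) := by fun_prop
    exact (g.continuous.aestronglyMeasurable.mul m1.aestronglyMeasurable).mul
      m2.aestronglyMeasurable
  · filter_upwards [aux_ne] with x hx
    rw [norm_mul, norm_mul, aux_norm_sign hx, Complex.norm_cpow_eq_rpow_re_of_pos (abs_pos.2 hx)]
    simp

lemma aux_pow {x : ℝ} (hx : x ≠ 0) (a : ℂ) :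
    (x : ℂ) * (1 / ((Real.pi * x ^ 2 : ℝ) : ℂ)) ^ a
      = (Real.pi : ℂ) ^ (-a) * ((Real.sign x : ℂ) * ((|x| : ℝ) : ℂ) ^ (1 - 2 * a)) := by
  have hax : 0 < |x| := abs_pos.2 hx
  have h1 : (1 / ((Real.pi * x ^ 2 : ℝ) : ℂ)) ^ a
      = (Real.pi : ℂ) ^ (-a) * ((|x| : ℝ) : ℂ) ^ (- 2 * a) := by
    rw [← sq_abs, ← Complex.ofReal_one, ← Complex.ofReal_div,
      Complex.cpow_def_of_ne_zero (by rw [Complex.ofReal_ne_zero]; positivity),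
      Complex.cpow_def_of_ne_zero (by rw [Complex.ofReal_ne_zero]; positivity),
      Complex.cpow_def_of_ne_zero (by rw [Complex.ofReal_ne_zero]; positivity),
      ← Complex.ofReal_log (by positivity), ← Complex.ofReal_log (by positivity),
      ← Complex.ofReal_log (by positivity), one_div, Real.log_inv,
      Real.log_mul (by positivity) (by positivity), Real.log_pow, ← Complex.exp_add]
    congr 1
    push_cast
    ring
  have h2 : (x : ℂ) = (Real.sign x : ℂ) * ((|x| : ℝ) : ℂ) := by
    rw [← Complex.ofReal_mul]
    congr 1
    rcases lt_or_gt_of_ne hx with h | h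
    · simp [Real.sign_of_neg h, abs_of_neg h]
    · simp [Real.sign_of_pos h, abs_of_pos h]
  rw [h1, show (1 - 2 * a) = 1 + (-2 * a) by ring,
    Complex.cpow_add _ _ (by rw [Complex.ofReal_ne_zero]; positivity), Complex.cpow_one]
  nth_rw 1 [h2]
  ring

lemma aux_gamma_int {x : ℝ} (hx : x ≠ 0) {a : ℂ} (ha : 0 < a.re) :
    ∫ t : ℝ in Set.Ioi 0, (t : ℂ) ^ (a - 1) * Complex.exp (-(((Real.pi * x ^ 2 : ℝ) : ℂ) * t))
      = (1 / ((Real.pi * x ^ 2 : ℝ) : ℂ)) ^ a * Complex.Gamma a :=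
  Complex.integral_cpow_mul_exp_neg_mul_Ioi ha (by positivity)

lemma aux_mellin (g : SchwartzMap ℝ ℂ) (a : ℂ) (h1 : 1 / 2 < a.re) (h2 : a.re < 1) :
    mellin (fun t : ℝ => ∫ x : ℝ, g x * x * Complex.exp (-(((Real.pi * x ^ 2 : ℝ) : ℂ) * t))) a
      = Complex.Gamma a * (Real.pi : ℂ) ^ (-a) *
        ∫ x : ℝ, g x * (Real.sign x : ℂ) * ((|x| : ℝ) : ℂ) ^ (1 - 2 * a) := by
  have ha : 0 < a.re := by linarith
  set F : ℝ → ℝ → ℂ := fun x t =>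
    g x * x * ((t : ℂ) ^ (a - 1) * Complex.exp (-(((Real.pi * x ^ 2 : ℝ) : ℂ) * t))) with hF
  have hFi : Integrable (Function.uncurry F) (volume.prod (volume.restrict (Set.Ioi 0))) := by
    have hm : Measurable (Function.uncurry F) := by
      have := g.continuous.measurable
      simp only [hF, Function.uncurry_def]
      fun_prop
    rw [integrable_prod_iff hm.aestronglyMeasurable]
    constructor
    · filter_upwards [aux_ne] with x hx
      simp only [Function.uncurry_apply_pair, hF]
      refine Integrable.const_mul ?_ _
      refine .of_integral_ne_zero ?_
      rw [aux_gamma_int hx ha]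
      refine mul_ne_zero ?_ (Complex.Gamma_ne_zero_of_re_pos ha)
      rw [Complex.cpow_ne_zero_iff]
      left
      rw [one_div, Ne, inv_eq_zero, Complex.ofReal_eq_zero]
      positivity
    · refine ((aux_int g (1 - 2 * a.re) (by linarith) (by linarith)).const_mul
        (Real.pi ^ (-a.re) * Real.Gamma a.re)).congr ?_
      filter_upwards [aux_ne] with x hx
      have hax : 0 < |x| := abs_pos.2 hx
      have key := Real.integral_rpow_mul_exp_neg_mul_Ioi ha (r := Real.pi * x ^ 2) (by positivity)
      have : ∫ t in Set.Ioi (0:ℝ), ‖Function.uncurry F (x, t)‖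
          = ∫ t in Set.Ioi (0:ℝ), ‖g x‖ * |x| *
            (t ^ (a.re - 1) * Real.exp (-(Real.pi * x ^ 2 * t))) := by
        refine setIntegral_congr_fun measurableSet_Ioi fun t ht => ?_
        simp only [Function.uncurry_apply_pair, hF, norm_mul]
        rw [Complex.norm_cpow_eq_rpow_re_of_pos ht, Complex.norm_exp, Complex.norm_real,
          Real.norm_eq_abs, ← Complex.ofReal_mul, ← Complex.ofReal_neg, Complex.ofReal_re]
        simp
      rw [this, integral_const_mul, key, one_div, Real.inv_rpow (by positivity),
        ← Real.rpow_neg (by positivity), Real.mul_rpow (by positivity) (by positivity),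
        ← sq_abs, ← Real.rpow_natCast, ← Real.rpow_mul hax.le,
        show 1 - 2 * a.re = 1 + ((2 : ℕ) : ℝ) * -a.re by push_cast; ring,
        Real.rpow_add hax, Real.rpow_one]
      ring
  have hsw := integral_integral_swap hFi
  rw [← integral_const_mul]
  have hl : ∫ x, ∫ t in Set.Ioi (0:ℝ), F x t = ∫ x : ℝ, Complex.Gamma a * (Real.pi : ℂ) ^ (-a) *
        (g x * (Real.sign x : ℂ) * ((|x| : ℝ) : ℂ) ^ (1 - 2 * a)) := by
    refine integral_congr_ae ?_
    filter_upwards [aux_ne] with x hx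
    simp only [hF]
    rw [integral_const_mul, aux_gamma_int hx ha]
    have := aux_pow hx a
    linear_combination g x * Complex.Gamma a * this
  rw [← hl, hsw]
  unfold mellin
  refine setIntegral_congr_fun measurableSet_Ioi fun t ht => ?_
  simp only [hF, smul_eq_mul]
  rw [← integral_const_mul]
  congr 1
  ext x
  ring

open scoped FourierTransform in
lemma aux_fourier (t : ℝ) (ht : 0 < t) :
    𝓕 (fun x : ℝ => (x : ℂ) * Complex.exp (-Real.pi * (t : ℂ) * (x : ℂ) ^ 2)) =
      fun x : ℝ => -Complex.I * x * (t : ℂ) ^ (-(3 / 2) : ℂ) *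
        Complex.exp (-Real.pi / t * (x : ℂ) ^ 2) := by
  have htc : (t : ℂ) ≠ 0 := by exact_mod_cast ht.ne'
  have hpc : (Real.pi : ℂ) ≠ 0 := by exact_mod_cast Real.pi_ne_zero
  have hb : 0 < ((Real.pi : ℂ) * t).re := by
    rw [← Complex.ofReal_mul, Complex.ofReal_re]; positivity
  set h : ℝ → ℂ := fun x => Complex.exp (-Real.pi * (t : ℂ) * (x : ℂ) ^ 2) with hh
  have hd : ∀ x : ℝ, HasDerivAt h ((-2 * Real.pi * t) * (x * h x)) x := by
    intro x
    have h1 : HasDerivAt (fun z : ℂ => Complex.exp (-Real.pi * (t : ℂ) * z ^ 2))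
      (Complex.exp (-Real.pi * (t : ℂ) * (x : ℂ) ^ 2) *
        (-Real.pi * (t : ℂ) * (((2 : ℕ) : ℂ) * (x : ℂ) ^ (2 - 1) * 1))) (x : ℂ) :=
      (((hasDerivAt_id (x : ℂ)).pow 2).const_mul _).cexp
    convert h1.comp_ofReal using 1
    simp only [hh]
    push_cast
    ring
  have hde : deriv h = fun x : ℝ => (-2 * Real.pi * t : ℂ) * (x * h x) :=
    funext fun x => (hd x).deriv
  have i1 : Integrable h := by
    have := integrable_cexp_neg_mul_sq hb
    simpa [hh, neg_mul] using this
  have i2 : Integrable (fun x : ℝ => (x : ℂ) * h x) := by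
    have := integrable_mul_cexp_neg_mul_sq hb
    simpa [hh, neg_mul] using this
  have key := Real.fourier_deriv i1 (fun x => (hd x).differentiableAt)
    (by rw [hde]; exact i2.const_mul _)
  have hg := fourier_gaussian_pi (b := (t : ℂ)) (by simpa using ht)
  have hlin : 𝓕 (deriv h) = fun x => (-2 * Real.pi * t : ℂ) * 𝓕 (fun x : ℝ => (x : ℂ) * h x) x := by
    rw [hde]
    ext y
    rw [Real.fourier_real_eq, Real.fourier_real_eq, ← integral_const_mul]
    congr 1
    ext x
    simp only [Circle.smul_def, smul_eq_mul]
    ring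
  rw [hlin] at key
  ext y
  have k := congrFun key y
  rw [show 𝓕 h = _ from hg] at k
  simp only [smul_eq_mul] at k
  have hp : (t : ℂ) ^ (-(3 / 2) : ℂ) * t = 1 / (t : ℂ) ^ (1 / 2 : ℂ) := by
    rw [one_div, ← Complex.cpow_neg]
    nth_rw 2 [← Complex.cpow_one (t : ℂ)]
    rw [← Complex.cpow_add _ _ htc]
    norm_num
  rw [← hp] at k
  have h2 : (-2 * Real.pi * t : ℂ) ≠ 0 := by
    simp [htc, hpc]
  apply mul_left_cancel₀ h2
  rw [k]
  ring

open scoped FourierTransform in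
lemma aux_transfer (f : SchwartzMap ℝ ℂ) (t : ℝ) (ht : 0 < t) :
    ∫ x : ℝ, (𝓕 f) x * x * Complex.exp (-(((Real.pi * x ^ 2 : ℝ) : ℂ) * t))
      = -Complex.I * ((t : ℂ) ^ (-(3 / 2) : ℂ) •
        ∫ x : ℝ, f x * x * Complex.exp (-(((Real.pi * x ^ 2 : ℝ) : ℂ) * (t⁻¹ : ℝ)))) := by
  have hb : 0 < ((Real.pi : ℂ) * t).re := by
    rw [← Complex.ofReal_mul, Complex.ofReal_re]; positivity
  have i2 : Integrable (fun x : ℝ => (x : ℂ) * Complex.exp (-Real.pi * (t : ℂ) * (x : ℂ) ^ 2)) := by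
    have := integrable_mul_cexp_neg_mul_sq hb
    simpa [neg_mul] using this
  have key : ∫ x : ℝ, 𝓕 (f : ℝ → ℂ) x • ((x : ℂ) * Complex.exp (-Real.pi * (t : ℂ) * (x : ℂ) ^ 2))
      = ∫ x : ℝ, f x •
        𝓕 (fun x : ℝ => (x : ℂ) * Complex.exp (-Real.pi * (t : ℂ) * (x : ℂ) ^ 2)) x := by
    simpa using! (VectorFourier.integral_fourierIntegral_smul_eq_flip (L := innerₗ ℝ)
      Real.continuous_fourierChar continuous_inner f.integrable i2)
  rw [aux_fourier t ht] at key
  rw [smul_eq_mul, ← mul_assoc, ← integral_const_mul]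
  refine Eq.trans ?_ (key.trans ?_)
  · congr 1
    ext x
    rw [SchwartzMap.fourier_coe, smul_eq_mul, mul_assoc]
    congr 3
    push_cast
    ring
  · congr 1
    ext x
    have : (-Real.pi / t * (x : ℂ) ^ 2 : ℂ) = (-(((Real.pi * x ^ 2 : ℝ) : ℂ) * (t⁻¹ : ℝ))) := by
      push_cast
      ring
    beta_reduce
    rw [this, smul_eq_mul]
    ring

open scoped FourierTransform in
lemma aux_fourierTr (f : SchwartzMap ℝ ℂ) : fourierTr (fun x => f x) = fun x => (𝓕 f) x := by
  ext y
  rw [SchwartzMap.fourier_coe, Real.fourier_real_eq_integral_exp_smul]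
  unfold fourierTr
  congr 1
  ext x
  rw [smul_eq_mul]
  congr 2
  push_cast
  ring

/-- Local zeta functional equation for the sign character in dimension one:
for a Schwartz function `f` and `−1 < Re s < 0`, both zeta integrals converge
absolutely and
`∫ 𝓕f(ξ) sign(ξ)|ξ|^s dξ = −i π^{−s−1/2} (Γ(s/2+1)/Γ((1−s)/2)) ∫ f(x) sign(x)|x|^{−s−1} dx`. -/
theorem zeta_functional_equation_sign_dim_one
    (f : SchwartzMap ℝ ℂ) (s : ℂ) (h₁ : (-1 : ℝ) < s.re) (h₂ : s.re < 0) :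
    Integrable (fun ξ : ℝ =>
        fourierTr (fun x => f x) ξ * (Real.sign ξ : ℂ) * (((|ξ| : ℝ) : ℂ) ^ s))
    ∧ Integrable (fun x : ℝ => f x * (Real.sign x : ℂ) * (((|x| : ℝ) : ℂ) ^ (-s - 1)))
    ∧ (∫ ξ : ℝ, fourierTr (fun x => f x) ξ * (Real.sign ξ : ℂ) * (((|ξ| : ℝ) : ℂ) ^ s))
      = -Complex.I * (Real.pi : ℂ) ^ (-s - 1 / 2)
          * (Complex.Gamma (s / 2 + 1) / Complex.Gamma ((1 - s) / 2))
          * ∫ x : ℝ, f x * (Real.sign x : ℂ) * (((|x| : ℝ) : ℂ) ^ (-s - 1)) := by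
  rw [aux_fourierTr]
  set g : SchwartzMap ℝ ℂ := FourierTransform.fourier f with hg
  have e1 : (-s - 1).re = -s.re - 1 := by simp
  refine ⟨aux_int' g s h₁ h₂, aux_int' f (-s - 1) (by rw [e1]; linarith) (by rw [e1]; linarith), ?_⟩
  have ea : ((1 - s) / 2).re = (1 - s.re) / 2 := by
    rw [show (2 : ℂ) = ((2 : ℝ) : ℂ) by norm_num, Complex.div_ofReal_re]; simp
  have eb : (s / 2 + 1).re = s.re / 2 + 1 := by
    rw [Complex.add_re, show (2 : ℂ) = ((2 : ℝ) : ℂ) by norm_num, Complex.div_ofReal_re]; simp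
  have hA := aux_mellin g ((1 - s) / 2) (by rw [ea]; linarith) (by rw [ea]; linarith)
  have hB := aux_mellin f (s / 2 + 1) (by rw [eb]; linarith) (by rw [eb]; linarith)
  have hm : mellin (fun t : ℝ =>
        ∫ x : ℝ, g x * x * Complex.exp (-(((Real.pi * x ^ 2 : ℝ) : ℂ) * t))) ((1 - s) / 2)
      = -Complex.I * mellin (fun t : ℝ =>
        ∫ x : ℝ, f x * x * Complex.exp (-(((Real.pi * x ^ 2 : ℝ) : ℂ) * t))) (s / 2 + 1) := by
    rw [show s / 2 + 1 = -((1 - s) / 2 + (-(3 / 2))) by ring, ← mellin_comp_inv,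
      ← mellin_cpow_smul, ← smul_eq_mul (-Complex.I), ← mellin_const_smul]
    unfold mellin
    refine setIntegral_congr_fun measurableSet_Ioi fun t ht => ?_
    simp only
    rw [hg, aux_transfer f t ht, smul_eq_mul (-Complex.I)]
  rw [hA, hB, show 1 - 2 * ((1 - s) / 2) = s by ring,
    show 1 - 2 * (s / 2 + 1) = -s - 1 by ring] at hm
  have hpc : (Real.pi : ℂ) ≠ 0 := by exact_mod_cast Real.pi_ne_zero
  have hG : Complex.Gamma ((1 - s) / 2) ≠ 0 :=
    Complex.Gamma_ne_zero_of_re_pos (by rw [ea]; linarith)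
  have hP : (Real.pi : ℂ) ^ (-((1 - s) / 2)) ≠ 0 := by
    rw [Complex.cpow_ne_zero_iff]; exact Or.inl hpc
  have hpp : (Real.pi : ℂ) ^ (-(s / 2 + 1))
      = (Real.pi : ℂ) ^ (-s - 1 / 2) * (Real.pi : ℂ) ^ (-((1 - s) / 2)) := by
    rw [← Complex.cpow_add _ _ hpc]
    congr 1
    ring
  rw [hpp] at hm
  apply mul_left_cancel₀ (mul_ne_zero hG hP)
  rw [hm]
  field_simp
end
end
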